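/- (Comparative statics in network size, equation (13).) Let x ∈ (0,1), 0 ≤ p ≤ x, p_h ∈ [0,1), P ≥ 0, F_O ≥ F_C ≥ 0. Regard B*(n) = n x[P + p(F_O − F_C) + p_h n F_O] / (2[n x(1−p_h) + x − p]) as a function of a real variable n on the region n ≥ 1 (where n x(1−p_h) + x − p > 0 automatically holds). Then dB*/dn = { x(x − p)·[P + p(F_O − F_C) + 2 p_h n F_O] + p_h n² x² F_O(1 − p_h) } / (2[n x(1−p_h) + x − p]^2) ≥ 0; in particular B* is monotonically nondecreasing in n. -/

import Mathlib

/-!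
As a function of the network size `t`, the equilibrium bribe is a quotient
`t (b t + a) / (c t + d)` with nonnegative coefficients. In the quotient rule the terms `a c t`
cancel and the numerator becomes `a d + 2 b d t + b c t²`, in which every term is nonnegative for
`t > 0`.
-/

theorem hasDerivAt_mul_affine_div_affine {𝕜 : Type*} [NontriviallyNormedField 𝕜] (a b : 𝕜)
    {c d t : 𝕜} (h : c * t + d ≠ 0) :
    HasDerivAt (fun s => s * (b * s + a) / (c * s + d))
      ((a * d + 2 * b * d * t + b * c * t ^ 2) / (c * t + d) ^ 2) t := by
  have affine (k l : 𝕜) : HasDerivAt (fun s => k * s + l) k t := by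
    simpa using ((hasDerivAt_id' t).const_mul k).add_const l
  have numerator : HasDerivAt (fun s => s * (b * s + a)) (2 * b * t + a) t :=
    ((hasDerivAt_id' t).fun_mul (affine b a)).congr_deriv (by ring)
  exact (numerator.fun_div (affine c d) h).congr_deriv (by ring)

/-- The equilibrium bribe size `B*` of the bribery-network model in a network of `n` officers,
with `n` taken last and real so that `B*` can be differentiated in it. -/
noncomputable def equilibriumBribe (x p ph P FO FC n : ℝ) : ℝ :=
  n * x * (P + p * (FO - FC) + ph * n * FO) / (2 * (n * x * (1 - ph) + x - p))

/-- The marginal bribe `dB*/dn`, in the closed form of equation (13). -/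
noncomputable def marginalBribe (x p ph P FO FC n : ℝ) : ℝ :=
  (x * (x - p) * (P + p * (FO - FC) + 2 * ph * n * FO) + ph * n ^ 2 * x ^ 2 * FO * (1 - ph)) /
    (2 * (n * x * (1 - ph) + x - p) ^ 2)

section Bribe

variable {x p ph P FO FC n : ℝ}

theorem equilibriumBribe_eq_mul_affine_div_affine :
    equilibriumBribe x p ph P FO FC = fun n =>
      n * (x * ph * FO / 2 * n + x * (P + p * (FO - FC)) / 2) / (x * (1 - ph) * n + (x - p)) := by
  funext n
  rw [equilibriumBribe, ← div_div]
  congr 1 <;> ring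

theorem hasDerivAt_equilibriumBribe (h : n * x * (1 - ph) + x - p ≠ 0) :
    HasDerivAt (equilibriumBribe x p ph P FO FC) (marginalBribe x p ph P FO FC n) n := by
  have denom_eq : x * (1 - ph) * n + (x - p) = n * x * (1 - ph) + x - p := by ring
  rw [equilibriumBribe_eq_mul_affine_div_affine]
  refine (hasDerivAt_mul_affine_div_affine _ _ (denom_eq ▸ h)).congr_deriv ?_
  rw [marginalBribe, ← div_div, denom_eq]
  congr 1
  ring

theorem bribe_denom_pos (hx : 0 < x) (hpx : p ≤ x) (hph : ph < 1) (hn : 0 < n) :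
    0 < n * x * (1 - ph) + x - p := by
  have : 0 < n * x * (1 - ph) := mul_pos (mul_pos hn hx) (sub_pos.2 hph)
  linarith

theorem marginalBribe_nonneg (hx : 0 ≤ x) (hpx : p ≤ x) (hph₀ : 0 ≤ ph) (hph₁ : ph ≤ 1)
    (hFO : 0 ≤ FO) (hstake : 0 ≤ P + p * (FO - FC)) (hn : 0 ≤ n) :
    0 ≤ marginalBribe x p ph P FO FC n := by
  have := sub_nonneg.2 hpx
  have := sub_nonneg.2 hph₁
  unfold marginalBribe
  positivity

end Bribe

theorem bribe_monotone_in_network_size_general {x p ph P FO FC : ℝ} (hx : 0 < x) (hpx : p ≤ x)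
    (hph : ph ∈ Set.Ico 0 1) (hFO : 0 ≤ FO) (hstake : 0 ≤ P + p * (FO - FC)) :
    (∀ n ∈ Set.Ioi (0 : ℝ),
      0 < n * x * (1 - ph) + x - p ∧
      HasDerivAt (equilibriumBribe x p ph P FO FC) (marginalBribe x p ph P FO FC n) n ∧
      0 ≤ marginalBribe x p ph P FO FC n) ∧
    MonotoneOn (equilibriumBribe x p ph P FO FC) (Set.Ioi 0) := by
  have denom_pos : ∀ n ∈ Set.Ioi 0, 0 < n * x * (1 - ph) + x - p :=
    fun _ => bribe_denom_pos hx hpx hph.2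
  have deriv_bribe : ∀ n ∈ Set.Ioi 0,
      HasDerivAt (equilibriumBribe x p ph P FO FC) (marginalBribe x p ph P FO FC n) n :=
    fun n hn => hasDerivAt_equilibriumBribe (denom_pos n hn).ne'
  have marginal_nonneg : ∀ n ∈ Set.Ioi 0, 0 ≤ marginalBribe x p ph P FO FC n :=
    fun _ hn => marginalBribe_nonneg hx.le hpx hph.1 hph.2.le hFO hstake (le_of_lt hn)
  refine ⟨fun n hn => ⟨denom_pos n hn, deriv_bribe n hn, marginal_nonneg n hn⟩, ?_⟩
  exact monotoneOn_of_hasDerivWithinAt_nonneg (convex_Ioi 0)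
    (HasDerivAt.continuousOn deriv_bribe)
    (fun n hn => (deriv_bribe n (interior_subset hn)).hasDerivWithinAt)
    (fun n hn => marginal_nonneg n (interior_subset hn))

/-- Equation (13): comparative statics of the equilibrium bribe size in the
(real-valued) network size `n`, on the region `n ≥ 1`, where
`n x (1 - p_h) + x - p > 0` holds automatically.  The derivative is
`{x(x-p)[P + p(F_O - F_C) + 2 p_h n F_O] + p_h n² x² F_O (1-p_h)} /
 (2[n x(1-p_h)+x-p]^2) ≥ 0`, so `B*` is monotonically nondecreasing in `n`. -/
theorem bribe_monotone_in_network_size (x p ph P FO FC : ℝ)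
    (hx : x ∈ Set.Ioo (0 : ℝ) 1) (hp0 : 0 ≤ p) (hpx : p ≤ x)
    (hph : ph ∈ Set.Ico (0 : ℝ) 1) (hP : 0 ≤ P) (hFC : 0 ≤ FC) (hFOC : FC ≤ FO) :
    (∀ n ∈ Set.Ici (1 : ℝ),
      0 < n * x * (1 - ph) + x - p ∧
      HasDerivAt
        (fun m : ℝ => m * x * (P + p * (FO - FC) + ph * m * FO) /
          (2 * (m * x * (1 - ph) + x - p)))
        ((x * (x - p) * (P + p * (FO - FC) + 2 * ph * n * FO) +
            ph * n ^ 2 * x ^ 2 * FO * (1 - ph)) /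
          (2 * (n * x * (1 - ph) + x - p) ^ 2)) n ∧
      0 ≤ (x * (x - p) * (P + p * (FO - FC) + 2 * ph * n * FO) +
            ph * n ^ 2 * x ^ 2 * FO * (1 - ph)) /
          (2 * (n * x * (1 - ph) + x - p) ^ 2)) ∧
    MonotoneOn
      (fun m : ℝ => m * x * (P + p * (FO - FC) + ph * m * FO) /
        (2 * (m * x * (1 - ph) + x - p)))
      (Set.Ici 1) := by
  obtain ⟨pointwise, monotone⟩ := bribe_monotone_in_network_size_general hx.1 hpx hph
    (hFC.trans hFOC) (add_nonneg hP (mul_nonneg hp0 (sub_nonneg.2 hFOC)))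
  have region : Set.Ici (1 : ℝ) ⊆ Set.Ioi 0 := Set.Ici_subset_Ioi.2 one_pos
  exact ⟨fun n hn => pointwise n (region hn), monotone.mono region⟩
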